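/- Let p be a prime, A = (ℤ/pℤ)^r with r ≥ 2, and ℓ > 1 an integer with gcd(ℓ, p) = 1. For any Galois extension L/k of number fields with Gal(L/k) ≅ A, the order of the ℓ-torsion of the relative class group satisfies |Cl_{L/k}[ℓ]| = ∏_i |Cl_{K_i/k}[ℓ]|, where K_i ranges over all (p^r−1)/(p−1) subfields of L of degree p over k. -/

import Mathlib

open NumberField

/-- The `ℓ`-torsion subgroup `G[ℓ] = {x : x^ℓ = 1}` of a commutative group. -/
def lTors (G : Type*) [CommGroup G] (ℓ : ℕ) : Subgroup G where
  carrier := {x | x ^ ℓ = 1}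
  one_mem' := one_pow ℓ
  mul_mem' := by
    intro a b ha hb
    simp only [Set.mem_setOf_eq] at *
    rw [mul_pow, ha, hb, mul_one]
  inv_mem' := by
    intro a ha
    simp only [Set.mem_setOf_eq] at *
    rw [inv_pow, ha, inv_one]

/-!
Let `G = Gal(L/k)` and write `N_H` for the norm of a subgroup `H ≤ G` acting on the class group of
`L`. Composing the norm to a fixed field with the extension of ideals gives `N_H`, and composing
them in the other order gives a power map of exponent prime to `ℓ`. Hence, on `ℓ`-torsion, the
relative class group of `L` is the kernel of `N_G`, and extension of ideals identifies the relative
class group of `L^H` with its `H`-invariants.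

The rest is linear algebra over the group ring: on the kernel of `N_G`, the idempotents `N_H / |H|`
attached to the subgroups of index `p` are orthogonal, since two such subgroups generate `G`, and
sum to `1`, since every nontrivial element of `G` lies in the same number of them.
-/

open scoped nonZeroDivisors Pointwise

section Torsion

variable {G : Type*} [CommGroup G] {ℓ n : ℕ}

theorem mem_lTors {x : G} : x ∈ lTors G ℓ ↔ x ^ ℓ = 1 :=
  Iff.rfl

theorem map_mem_lTors {G' : Type*} [CommGroup G'] (f : G →* G') {x : G} (hx : x ∈ lTors G ℓ) :
    f x ∈ lTors G' ℓ := by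
  rw [mem_lTors, ← map_pow, mem_lTors.mp hx, map_one]

theorem eq_one_of_mem_lTors_of_pow_eq_one (hn : n.Coprime ℓ) {x : G} (hx : x ∈ lTors G ℓ)
    (hxn : x ^ n = 1) : x = 1 := by
  simpa [hn.gcd_eq_one] using pow_gcd_eq_one.mpr ⟨hxn, mem_lTors.mp hx⟩

theorem exists_pow_pow_eq_of_mem_lTors (hn : n.Coprime ℓ) {x : G} (hx : x ∈ lTors G ℓ) :
    ∃ m : ℕ, (x ^ n) ^ m = x :=
  exists_pow_eq_self_of_coprime (hn.coprime_dvd_right (orderOf_dvd_of_pow_eq_one hx))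

end Torsion

section ActionNorm

variable (G M : Type*) [Group G] [CommGroup M] [MulDistribMulAction G M]

/-- The norm `x ↦ ∏ g, g • x` of a finite group `G` acting on a commutative group. -/
noncomputable def actionNorm [Finite G] : M →* M :=
  letI := Fintype.ofFinite G
  ∏ g : G, MulDistribMulAction.toMonoidHom M g

/-- The `ℓ`-torsion in the kernel of the norm of a finite group `G` acting on `M`. For a Galois
group of order prime to `ℓ` acting on a class group, this is the `ℓ`-torsion of the relative class
group. -/
noncomputable def normKerTorsion [Finite G] (ℓ : ℕ) : Subgroup M :=
  (actionNorm G M).ker ⊓ lTors M ℓ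

variable {G M}

theorem actionNorm_apply [Fintype G] (x : M) : actionNorm G M x = ∏ g : G, g • x := by
  rw [actionNorm, Subsingleton.elim (Fintype.ofFinite G) ‹_›, MonoidHom.finsetProd_apply]
  rfl

variable [Finite G]

theorem smul_actionNorm (g : G) (x : M) : g • actionNorm G M x = actionNorm G M x := by
  have := Fintype.ofFinite G
  simp_rw [actionNorm_apply, Finset.smul_prod', smul_smul]
  exact Equiv.prod_comp (Equiv.mulLeft g) fun h ↦ h • x

theorem actionNorm_smul (g : G) (x : M) : actionNorm G M (g • x) = actionNorm G M x := by
  have := Fintype.ofFinite G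
  simp_rw [actionNorm_apply, smul_smul]
  exact Equiv.prod_comp (Equiv.mulRight g) fun h ↦ h • x

theorem actionNorm_of_mem_fixedPoints {x : M} (hx : x ∈ FixedPoints.subgroup G M) :
    actionNorm G M x = x ^ Nat.card G := by
  have := Fintype.ofFinite G
  rw [actionNorm_apply, Finset.prod_congr rfl fun g _ ↦ hx g, Finset.prod_const, Finset.card_univ,
    Nat.card_eq_fintype_card]

theorem actionNorm_subgroup_smul (H : Subgroup G) [H.Normal] (g : G) (x : M) :
    actionNorm H M (g • x) = g • actionNorm H M x := by
  have := Fintype.ofFinite H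
  have hconj := Equiv.prod_comp (MulAut.conjNormal g).toEquiv fun h : H ↦ h • g • x
  rw [actionNorm_apply, actionNorm_apply, Finset.smul_prod', ← hconj]
  simp [Subgroup.smul_def, smul_smul]

theorem actionNorm_actionNorm_subgroup (H : Subgroup G) (x : M) :
    actionNorm G M (actionNorm H M x) = actionNorm G M x ^ Nat.card H := by
  have := Fintype.ofFinite H
  simp_rw [actionNorm_apply (G := H), map_prod, Subgroup.smul_def, actionNorm_smul]
  rw [Finset.prod_const, Finset.card_univ, Nat.card_eq_fintype_card]

theorem actionNorm_mem_fixedPoints_of_sup_eq_top {H K : Subgroup G} [H.Normal] (hHK : H ⊔ K = ⊤)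
    {x : M} (hx : x ∈ FixedPoints.subgroup K M) :
    actionNorm H M x ∈ FixedPoints.subgroup G M := by
  have hH : H ≤ MulAction.stabilizer G (actionNorm H M x) := fun h hh ↦
    smul_actionNorm (⟨h, hh⟩ : H) x
  have hK : K ≤ MulAction.stabilizer G (actionNorm H M x) := fun k hk ↦ by
    rw [MulAction.mem_stabilizer_iff, ← actionNorm_subgroup_smul, show k • x = x from hx ⟨k, hk⟩]
  exact fun g ↦ (hHK ▸ sup_le hH hK) (Subgroup.mem_top g)

theorem actionNorm_mem_normKerTorsion (H : Subgroup G) {ℓ : ℕ} {x : M}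
    (hx : x ∈ normKerTorsion G M ℓ) : actionNorm H M x ∈ normKerTorsion G M ℓ := by
  refine Subgroup.mem_inf.mpr ⟨?_, map_mem_lTors _ hx.2⟩
  rw [MonoidHom.mem_ker, actionNorm_actionNorm_subgroup, MonoidHom.mem_ker.mp hx.1, one_pow]

theorem actionNorm_eq_one_of_sup_eq_top {H K : Subgroup G} [H.Normal] (hHK : H ⊔ K = ⊤) {ℓ : ℕ}
    (hℓ : (Nat.card G).Coprime ℓ) {x : M}
    (hx : x ∈ normKerTorsion G M ℓ ⊓ FixedPoints.subgroup K M) : actionNorm H M x = 1 := by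
  obtain ⟨hker, htors⟩ := actionNorm_mem_normKerTorsion H hx.1
  refine eq_one_of_mem_lTors_of_pow_eq_one hℓ htors ?_
  rw [← actionNorm_of_mem_fixedPoints (actionNorm_mem_fixedPoints_of_sup_eq_top hHK hx.2)]
  exact hker

theorem prod_actionNorm_subgroup [Fintype G] {ι : Type*} [Fintype ι] (H : ι → Subgroup G) (x : M) :
    ∏ i, actionNorm (H i) M x = ∏ g : G, (g • x) ^ Nat.card {i // g ∈ H i} := by
  classical
  calc ∏ i, actionNorm (H i) M x
      = ∏ i, ∏ g : G, if g ∈ H i then g • x else 1 := by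
        refine Finset.prod_congr rfl fun i _ ↦ ?_
        rw [actionNorm_apply, ← Finset.prod_filter]
        exact (Finset.prod_subtype _ (by simp) fun g : G ↦ g • x).symm
    _ = ∏ g : G, ∏ i, if g ∈ H i then g • x else 1 := Finset.prod_comm
    _ = ∏ g : G, (g • x) ^ Nat.card {i // g ∈ H i} := by
        simp_rw [← Finset.prod_filter, Finset.prod_const, Nat.card_eq_fintype_card,
          Fintype.card_subtype]

end ActionNorm

section ElementaryAbelian

@[to_additive]
theorem subgroup_isCoatom_of_prime_index {G : Type*} [Group G] {H : Subgroup G}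
    (hH : H.index.Prime) : IsCoatom H := by
  refine ⟨fun h ↦ hH.ne_one (Subgroup.index_eq_one.mpr h), fun K hK ↦ ?_⟩
  have hdvd : H.relIndex K * K.index = H.index := Subgroup.relIndex_mul_index hK.le
  refine Subgroup.index_eq_one.mp ((Nat.prime_mul_iff.mp (hdvd ▸ hH)).elim (·.2) fun h ↦ ?_)
  exact absurd (Subgroup.relIndex_eq_one.mp h.2) hK.not_ge

variable {p : ℕ} [hp : Fact p.Prime] {V : Type*} [AddCommGroup V] [Module (ZMod p) V]

theorem index_ker_of_ne_zero {f : Module.Dual (ZMod p) V} (hf : f ≠ 0) :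
    f.ker.toAddSubgroup.index = p := by
  rw [LinearMap.ker_toAddSubgroup, AddSubgroup.index_ker,
    AddMonoidHom.range_eq_top.mpr (f.surjective hf)]
  simp

theorem card_dual_apply_eq_one [Finite V] {v : V} (hv : v ≠ 0) :
    Nat.card {f : Module.Dual (ZMod p) V // f v = 1} * p = Nat.card V := by
  let ev := Module.Dual.eval (ZMod p) V v
  have hev : ev ≠ 0 := (Module.eval_apply_eq_zero_iff (ZMod p) v).not.mpr hv
  have hfiber : {f : Module.Dual (ZMod p) V // f v = 1} ≃ ev.ker.toAddSubgroup :=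
    AddMonoidHom.fiberEquivKerOfSurjective (f := ev.toAddMonoidHom) (ev.surjective hev) 1
  have hdual : Module.Dual (ZMod p) V ≃ₗ[ZMod p] V := .ofFinrankEq _ _ Subspace.dual_finrank_eq
  rw [← Nat.card_congr hdual.toEquiv, Nat.card_congr hfiber,
    ← ev.ker.toAddSubgroup.card_mul_index, index_ker_of_ne_zero hev]

theorem exists_dual_ker_eq {W : AddSubgroup V} (hW : W.index = p) {v : V} (hv : v ∉ W) :
    ∃ f : Module.Dual (ZMod p) V, f v = 1 ∧ f.ker.toAddSubgroup = W := by
  obtain ⟨f, hfv, hWf⟩ :=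
    Submodule.exists_le_ker_of_notMem (p := AddSubgroup.toZModSubmodule p W) hv
  have hfv' : ((f v)⁻¹ • f) v = 1 := inv_mul_cancel₀ hfv
  refine ⟨(f v)⁻¹ • f, hfv', ?_⟩
  rw [LinearMap.ker_smul _ _ (inv_ne_zero hfv)]
  have hle : W ≤ f.ker.toAddSubgroup := hWf
  have hne : f.ker.toAddSubgroup ≠ ⊤ := fun h ↦ hfv (h ▸ AddSubgroup.mem_top v :)
  exact ((addSubgroup_isCoatom_of_prime_index (hW ▸ hp.out)).le_iff_eq hne).mp hle

theorem card_addSubgroup_index_eq_notMem [Finite V] {v : V} (hv : v ≠ 0) :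
    Nat.card {W : AddSubgroup V // W.index = p ∧ v ∉ W} * p = Nat.card V := by
  rw [← card_dual_apply_eq_one (p := p) hv]
  let ker (f : {f : Module.Dual (ZMod p) V // f v = 1}) :
      {W : AddSubgroup V // W.index = p ∧ v ∉ W} :=
    ⟨f.1.ker.toAddSubgroup, index_ker_of_ne_zero fun h ↦ by simpa [h] using f.2, by simp [f.2]⟩
  rw [← Nat.card_eq_of_bijective ker ⟨fun f g hfg ↦ ?_, fun ⟨W, hW, hvW⟩ ↦ ?_⟩]
  · have hker : f.1.ker = g.1.ker := Submodule.toAddSubgroup_injective (Subtype.ext_iff.mp hfg)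
    exact Subtype.ext <|
      Module.Dual.eq_of_ker_eq_of_apply_eq v hker (f.2.trans g.2.symm) (by simp [f.2])
  · obtain ⟨f, hf, rfl⟩ := exists_dual_ker_eq hW hvW
    exact ⟨⟨f, hf⟩, rfl⟩

theorem card_subgroup_index_eq_notMem {G : Type*} [Group G] [Finite G]
    (e : G ≃* Multiplicative V) {g : G} (hg : g ≠ 1) :
    Nat.card {H : Subgroup G // H.index = p ∧ g ∉ H} * p = Nat.card G := by
  have : Finite V := .of_equiv G e.toEquiv
  let E : Subgroup G ≃ AddSubgroup V := (e.mapSubgroup.trans AddSubgroup.toSubgroup.symm).toEquiv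
  have hE (H : Subgroup G) : H.index = p ∧ g ∉ H ↔ (E H).index = p ∧ (e g).toAdd ∉ E H := by
    have hmem : (e g).toAdd ∈ E H ↔ g ∈ H :=
      Subgroup.mem_map_iff_mem (f := (e : G →* Multiplicative V)) e.injective
    have hindex : (E H).index = H.index :=
      (H.index_map_equiv e : (H.map (e : G →* Multiplicative V)).index = H.index)
    rw [hmem, hindex]
  rw [Nat.card_congr (E.subtypeEquiv (q := fun W ↦ W.index = p ∧ (e g).toAdd ∉ W) hE),
    card_addSubgroup_index_eq_notMem (by simpa using hg)]
  exact (Nat.card_congr e.toEquiv).symm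

end ElementaryAbelian

section Decomposition

variable {p : ℕ} {G M : Type*} [Group G] [Finite G] [CommGroup M] [MulDistribMulAction G M]

variable (p G M) in
/-- The product map from the family of `H`-fixed parts of `normKerTorsion G M ℓ`, where `H` runs
over the subgroups of index `p`. -/
noncomputable def prodFixedPoints [Fintype {H : Subgroup G // H.index = p}] (ℓ : ℕ) :
    (∀ H : {H : Subgroup G // H.index = p},
      ↥(normKerTorsion G M ℓ ⊓ FixedPoints.subgroup H.1 M)) →* normKerTorsion G M ℓ :=
  ∏ H, (Subgroup.inclusion inf_le_left).comp (Pi.evalMonoidHom _ H)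

theorem coe_prodFixedPoints [Fintype {H : Subgroup G // H.index = p}] {ℓ : ℕ}
    (x : ∀ H : {H : Subgroup G // H.index = p},
      ↥(normKerTorsion G M ℓ ⊓ FixedPoints.subgroup H.1 M)) :
    (prodFixedPoints p G M ℓ x : M) = ∏ H, (x H : M) := by
  rw [prodFixedPoints, MonoidHom.finsetProd_apply, Subgroup.val_finsetProd]
  rfl

variable [hp : Fact p.Prime] {V : Type*} [AddCommGroup V] [Module (ZMod p) V]

theorem card_subgroup_index_eq_mem (e : G ≃* Multiplicative V) {g : G} (hg : g ≠ 1) :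
    Nat.card {H : {H : Subgroup G // H.index = p} // g ∈ H.1} * p + Nat.card G =
      Nat.card {H : Subgroup G // H.index = p} * p := by
  classical
  rw [← card_subgroup_index_eq_notMem (p := p) e hg, ← add_mul,
    ← Nat.card_congr (Equiv.subtypeSubtypeEquivSubtypeInter (fun H : Subgroup G ↦ H.index = p)
      fun H ↦ g ∉ H), ← Nat.card_sum, Nat.card_congr (Equiv.sumCompl _)]

theorem prod_actionNorm_index_eq_pow (e : G ≃* Multiplicative V)
    [Fintype {H : Subgroup G // H.index = p}] (x : M) :
    (∏ H : {H : Subgroup G // H.index = p}, actionNorm H.1 M x) ^ p *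
        actionNorm G M x ^ Nat.card G =
      x ^ Nat.card G * actionNorm G M x ^ (Nat.card {H : Subgroup G // H.index = p} * p) := by
  classical
  have := Fintype.ofFinite G
  have hone : Nat.card {H : {H : Subgroup G // H.index = p} // 1 ∈ H.1} =
      Nat.card {H : Subgroup G // H.index = p} :=
    Nat.card_congr (Equiv.subtypeUnivEquiv fun H ↦ one_mem H.1)
  rw [prod_actionNorm_subgroup, actionNorm_apply, ← Finset.prod_pow, ← Finset.prod_pow,
    ← Finset.prod_mul_distrib, ← Finset.prod_pow]
  simp_rw [← pow_mul, ← pow_add]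
  rw [← Finset.mul_prod_erase _ _ (Finset.mem_univ 1), hone,
    ← Finset.mul_prod_erase _ (fun g ↦ (g • x) ^ _) (Finset.mem_univ 1), ← mul_assoc, one_smul,
    ← pow_add, add_comm]
  congr 1
  refine Finset.prod_congr rfl fun g hg ↦ ?_
  rw [card_subgroup_index_eq_mem e (Finset.ne_of_mem_erase hg)]

theorem prod_actionNorm_index_eq_pow_of_mem_ker (e : G ≃* Multiplicative V)
    [Fintype {H : Subgroup G // H.index = p}] {x : M} (hx : x ∈ (actionNorm G M).ker) :
    (∏ H : {H : Subgroup G // H.index = p}, actionNorm H.1 M x) ^ p = x ^ Nat.card G := by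
  simpa [MonoidHom.mem_ker.mp hx] using prod_actionNorm_index_eq_pow (p := p) e x

theorem coprime_card_of_mulEquiv_multiplicative (e : G ≃* Multiplicative V) {ℓ : ℕ}
    (hℓ : ℓ.Coprime p) : (Nat.card G).Coprime ℓ := by
  have : Finite V := .of_equiv G e.toEquiv
  rw [Nat.card_congr e.toEquiv, Nat.card_congr Multiplicative.toAdd,
    Module.natCard_eq_pow_finrank (K := ZMod p), Nat.card_zmod]
  exact hℓ.symm.pow_left _

theorem prodFixedPoints_injective (e : G ≃* Multiplicative V)
    [Fintype {H : Subgroup G // H.index = p}] {ℓ : ℕ} (hℓ : ℓ.Coprime p) :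
    Function.Injective (prodFixedPoints p G M ℓ) := by
  have hcard := coprime_card_of_mulEquiv_multiplicative e hℓ
  refine (injective_iff_map_eq_one _).mpr fun x hx ↦ funext fun H ↦ Subtype.ext ?_
  have hprod : ∏ K, (x K : M) = 1 := by rw [← coe_prodFixedPoints, hx, Subgroup.coe_one]
  have hvanish (K) (_ : K ∈ Finset.univ) (hne : K ≠ H) : actionNorm H.1 M (x K : M) = 1 := by
    have : IsMulCommutative G := ⟨⟨fun a b ↦ e.injective (by simp [mul_comm])⟩⟩
    have hH := subgroup_isCoatom_of_prime_index (H.2 ▸ hp.out)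
    have hK := subgroup_isCoatom_of_prime_index (K.2 ▸ hp.out)
    exact actionNorm_eq_one_of_sup_eq_top
      (hH.sup_eq_top_of_ne hK (Subtype.coe_ne_coe.mpr hne.symm)) hcard (x K).2
  have hnorm : actionNorm H.1 M (x H : M) = 1 := by
    rw [← Finset.prod_eq_single H hvanish (by simp), ← map_prod, hprod, map_one]
  rw [actionNorm_of_mem_fixedPoints (x H).2.2] at hnorm
  exact eq_one_of_mem_lTors_of_pow_eq_one (hcard.coprime_dvd_left H.1.card_subgroup_dvd_card)
    (x H).2.1.2 hnorm

theorem prodFixedPoints_surjective (e : G ≃* Multiplicative V)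
    [Fintype {H : Subgroup G // H.index = p}] {ℓ : ℕ} (hℓ : ℓ.Coprime p) :
    Function.Surjective (prodFixedPoints p G M ℓ) := by
  intro x
  obtain ⟨m, hm⟩ := exists_pow_pow_eq_of_mem_lTors
    (coprime_card_of_mulEquiv_multiplicative e hℓ) x.2.2
  let y (H : {H : Subgroup G // H.index = p}) :
      ↥(normKerTorsion G M ℓ ⊓ FixedPoints.subgroup H.1 M) :=
    ⟨actionNorm H.1 M x, actionNorm_mem_normKerTorsion H.1 x.2, fun h ↦ smul_actionNorm h _⟩
  refine ⟨(y ^ p) ^ m, Subtype.ext ?_⟩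
  rw [map_pow, map_pow, Subgroup.coe_pow, Subgroup.coe_pow, coe_prodFixedPoints,
    prod_actionNorm_index_eq_pow_of_mem_ker e x.2.1, hm]

variable (M) in
/-- The decomposition of `normKerTorsion G M ℓ` into its `H`-fixed parts, `H` running over the
subgroups of index `p` of an elementary abelian `p`-group `G`. -/
noncomputable def prodFixedPointsEquiv (e : G ≃* Multiplicative V) {ℓ : ℕ} (hℓ : ℓ.Coprime p) :
    (∀ H : {H : Subgroup G // H.index = p},
      ↥(normKerTorsion G M ℓ ⊓ FixedPoints.subgroup H.1 M)) ≃* normKerTorsion G M ℓ :=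
  letI := Fintype.ofFinite {H : Subgroup G // H.index = p}
  .ofBijective (prodFixedPoints p G M ℓ)
    ⟨prodFixedPoints_injective e hℓ, prodFixedPoints_surjective e hℓ⟩

end Decomposition

section ClassGroupLift

variable {S P : Type*} [CommRing S] [IsDedekindDomain S] [Monoid P] (φ : (Ideal S)⁰ →* P)

theorem apply_eq_of_mk0_eq_mk0 (hφ : ∀ I : (Ideal S)⁰, (I : Ideal S).IsPrincipal → φ I = 1)
    {I J : (Ideal S)⁰} (hIJ : ClassGroup.mk0 I = ClassGroup.mk0 J) : φ I = φ J := by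
  obtain ⟨x, y, hx, hy, hxy⟩ := ClassGroup.mk0_eq_mk0_iff.mp hIJ
  let span (z : S) (hz : z ≠ 0) : (Ideal S)⁰ :=
    ⟨Ideal.span {z}, mem_nonZeroDivisors_of_ne_zero (Ideal.span_singleton_eq_bot.not.mpr hz)⟩
  have hspan (z : S) (hz : z ≠ 0) : φ (span z hz) = 1 := hφ _ ⟨z, rfl⟩
  calc φ I = φ (span x hx * I) := by rw [map_mul, hspan x hx, one_mul]
    _ = φ (span y hy * J) := congrArg φ (Subtype.ext hxy)
    _ = φ J := by rw [map_mul, hspan y hy, one_mul]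

variable (hφ : ∀ I : (Ideal S)⁰, (I : Ideal S).IsPrincipal → φ I = 1)

/-- The universal property of the class group: a homomorphism from the monoid of nonzero ideals that
is trivial on principal ideals factors through the class group. -/
noncomputable def classGroupLift : ClassGroup S →* P :=
  ((Con.ker ClassGroup.mk0).lift φ fun _ _ ↦ apply_eq_of_mk0_eq_mk0 φ hφ).comp
    (Con.quotientKerEquivOfSurjective ClassGroup.mk0 ClassGroup.mk0_surjective).symm.toMonoidHom

theorem classGroupLift_mk0 (I : (Ideal S)⁰) :
    classGroupLift φ hφ (ClassGroup.mk0 I) = φ I := by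
  have hsymm : (Con.quotientKerEquivOfSurjective ClassGroup.mk0 ClassGroup.mk0_surjective).symm
      (ClassGroup.mk0 I) = (I : (Con.ker ClassGroup.mk0).Quotient) :=
    (MulEquiv.symm_apply_eq _).mpr rfl
  exact congrArg (Con.lift _ φ fun _ _ ↦ apply_eq_of_mk0_eq_mk0 φ hφ) hsymm

end ClassGroupLift

section ClassGroupNorm

variable (R S : Type*) [CommRing R] [IsDedekindDomain R] [CommRing S] [IsDedekindDomain S]
  [Algebra R S] [Module.Finite R S] [Module.IsTorsionFree R S]

variable {S} in
theorem relNorm_mem_nonZeroDivisors (I : (Ideal S)⁰) :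
    Ideal.relNorm R (I : Ideal S) ∈ (Ideal R)⁰ :=
  mem_nonZeroDivisors_of_ne_zero (Ideal.relNorm_eq_bot_iff.not.mpr (nonZeroDivisors.ne_zero I.2))

/-- The homomorphism of class groups induced by the relative norm of ideals. -/
noncomputable def classGroupNorm : ClassGroup S →* ClassGroup R :=
  classGroupLift (ClassGroup.mk0.comp <| ((Ideal.relNorm R : Ideal S →*₀ Ideal R).toMonoidHom.comp
    (Ideal S)⁰.subtype).codRestrict (Ideal R)⁰ (relNorm_mem_nonZeroDivisors R)) fun I hI ↦ by
      obtain ⟨x, hx⟩ := hI.principal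
      refine (ClassGroup.mk0_eq_one_iff _).mpr ⟨Algebra.intNorm R S x, ?_⟩
      simp [hx]

/-- The relative class group of `S` over `R`, the kernel of the norm on class groups. -/
noncomputable def relativeClassGroup : Subgroup (ClassGroup S) :=
  (classGroupNorm R S).ker

variable {S} in
theorem classGroupNorm_mk0 (I : (Ideal S)⁰) :
    classGroupNorm R S (ClassGroup.mk0 I) =
      ClassGroup.mk0 ⟨Ideal.relNorm R (I : Ideal S), relNorm_mem_nonZeroDivisors R I⟩ :=
  classGroupLift_mk0 _ _ I

variable {R S} in
theorem eq_classGroupNorm {f : ClassGroup S →* ClassGroup R}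
    (hf : ∀ (I : Ideal S) (hI : I ∈ (Ideal S)⁰) (hJ : Ideal.spanNorm R I ∈ (Ideal R)⁰),
      f (ClassGroup.mk0 ⟨I, hI⟩) = ClassGroup.mk0 ⟨Ideal.spanNorm R I, hJ⟩) :
    f = classGroupNorm R S := by
  ext x
  obtain ⟨I, rfl⟩ := ClassGroup.mk0_surjective x
  rw [classGroupNorm_mk0]
  exact hf I I.2 _

variable {R} in
theorem classGroupNorm_extendedHom (x : ClassGroup R) :
    classGroupNorm R S (ClassGroup.extendedHom R S x) = x ^ Module.finrank R S := by
  obtain ⟨I, rfl⟩ := ClassGroup.mk0_surjective x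
  rw [ClassGroup.extendedHom_mk0, classGroupNorm_mk0, ← map_pow]
  exact congrArg _ (Subtype.ext (Ideal.relNorm_algebraMap S (I : Ideal R)))

theorem classGroupNorm_classGroupNorm (T : Type*) [CommRing T] [IsDedekindDomain T] [Algebra R T]
    [Algebra T S] [IsScalarTower R T S] [Module.Finite R T] [Module.Finite T S]
    [Module.IsTorsionFree R T] [Module.IsTorsionFree T S] (x : ClassGroup S) :
    classGroupNorm R T (classGroupNorm T S x) = classGroupNorm R S x := by
  obtain ⟨I, rfl⟩ := ClassGroup.mk0_surjective x
  rw [classGroupNorm_mk0, classGroupNorm_mk0, classGroupNorm_mk0]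
  exact congrArg _ (Subtype.ext (Ideal.relNorm_relNorm R T (I : Ideal S)))

end ClassGroupNorm

section ClassGroupAction

variable {Γ S : Type*} [Group Γ] [CommRing S] [IsDedekindDomain S] [MulSemiringAction Γ S]

theorem smul_mem_nonZeroDivisors_ideal (g : Γ) (I : (Ideal S)⁰) :
    g • (I : Ideal S) ∈ (Ideal S)⁰ :=
  mem_nonZeroDivisors_of_ne_zero ((smul_ne_zero_iff_ne g).mpr (nonZeroDivisors.ne_zero I.2))

/-- The action of `g : Γ` on the class group of `S` given by `[I] ↦ [g • I]`. -/
noncomputable def classGroupSMul (g : Γ) : ClassGroup S →* ClassGroup S :=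
  classGroupLift (ClassGroup.mk0.comp
    (((MulDistribMulAction.toMonoidHom (Ideal S) g).comp (Ideal S)⁰.subtype).codRestrict (Ideal S)⁰
      (smul_mem_nonZeroDivisors_ideal g))) fun I hI ↦ by
    obtain ⟨x, hx⟩ := hI.principal
    refine (ClassGroup.mk0_eq_one_iff _).mpr ⟨g • x, ?_⟩
    change g • (I : Ideal S) = Ideal.span {g • x}
    rw [hx, Ideal.submodule_span_eq, Ideal.pointwise_smul_def, Ideal.map_span, Set.image_singleton,
      MulSemiringAction.toRingHom_apply]

theorem classGroupSMul_mk0 (g : Γ) (I : (Ideal S)⁰) :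
    classGroupSMul g (ClassGroup.mk0 I) =
      ClassGroup.mk0 ⟨g • (I : Ideal S), smul_mem_nonZeroDivisors_ideal g I⟩ :=
  classGroupLift_mk0 _ _ I

/-- The action on the class group induced by an action on the ring. The low priority lets a subgroup
`H` of `Γ` act through the restriction of the action of `Γ`. -/
noncomputable instance (priority := low) classGroupAction :
    MulDistribMulAction Γ (ClassGroup S) where
  smul g := classGroupSMul g
  one_smul x := by
    obtain ⟨I, rfl⟩ := ClassGroup.mk0_surjective x
    exact (classGroupSMul_mk0 1 I).trans (congrArg _ (Subtype.ext (one_smul Γ (I : Ideal S))))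
  mul_smul g h x := by
    obtain ⟨I, rfl⟩ := ClassGroup.mk0_surjective x
    change classGroupSMul (g * h) _ = classGroupSMul g (classGroupSMul h _)
    simp_rw [classGroupSMul_mk0, mul_smul]
  smul_mul g := map_mul (classGroupSMul g)
  smul_one g := map_one (classGroupSMul g)

theorem smul_mk0 (g : Γ) (I : (Ideal S)⁰) :
    g • ClassGroup.mk0 I =
      ClassGroup.mk0 ⟨g • (I : Ideal S), smul_mem_nonZeroDivisors_ideal g I⟩ :=
  classGroupSMul_mk0 g I

end ClassGroupAction

section GaloisNorm

variable (G A B : Type*) [Group G] [CommRing A] [CommRing B] [Algebra A B] [MulSemiringAction G B]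

attribute [local instance] FractionRing.liftAlgebra in
theorem algebraMap_intNorm_eq_prod_smul [Fintype G] [IsIntegrallyClosed A] [IsDomain A]
    [IsDomain B] [IsIntegrallyClosed B] [Module.Finite A B] [Module.IsTorsionFree A B]
    [IsGaloisGroup G A B] (x : B) :
    algebraMap A B (Algebra.intNorm A B x) = ∏ g : G, g • x := by
  let := IsFractionRing.mulSemiringAction G B (FractionRing B)
  have : IsGalois (FractionRing A) (FractionRing B) :=
    IsGaloisGroup.isGalois G (FractionRing A) (FractionRing B)
  rw [Algebra.algebraMap_intNorm_of_isGalois,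
    ← (IsGaloisGroup.mulEquivAlgEquiv G A B).toEquiv.prod_comp]
  rfl

variable [IsDedekindDomain A] [IsDedekindDomain B] [Module.IsTorsionFree A B]

variable {G A} in
theorem smul_extendedHom [SMulCommClass G A B] (g : G) (x : ClassGroup A) :
    g • ClassGroup.extendedHom A B x = ClassGroup.extendedHom A B x := by
  obtain ⟨I, rfl⟩ := ClassGroup.mk0_surjective x
  rw [ClassGroup.extendedHom_mk0, smul_mk0]
  refine congrArg _ (Subtype.ext ?_)
  simp only [Ideal.pointwise_smul_def, Ideal.map_map]
  congr 1
  ext a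
  exact smul_algebraMap g a

variable [Module.Finite A B] [IsGaloisGroup G A B]

theorem map_relNorm_le_prod_smul [Fintype G] (I : Ideal B) :
    (Ideal.relNorm A I).map (algebraMap A B) ≤ ∏ g : G, g • I := by
  rw [Ideal.map_relNorm, Ideal.span_le]
  rintro _ ⟨x, hx, rfl⟩
  rw [Function.comp_apply, algebraMap_intNorm_eq_prod_smul G A B, SetLike.mem_coe]
  exact Ideal.prod_mem_prod fun g _ ↦ Ideal.smul_mem_pointwise_smul g x I hx

theorem map_relNorm_eq_prod_smul [Fintype G] {I : Ideal B} (hI : I ≠ ⊥) :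
    (Ideal.relNorm A I).map (algebraMap A B) = ∏ g : G, g • I := by
  have : SMulCommClass G A B := IsGaloisGroup.commutes
  obtain ⟨J, hJ⟩ := Ideal.dvd_iff_le.mpr (map_relNorm_le_prod_smul G A B I)
  have hmul : Ideal.relNorm A I ^ Nat.card G =
      Ideal.relNorm A I ^ Nat.card G * Ideal.relNorm A J := by
    have := congrArg (Ideal.relNorm A) hJ
    rwa [Ideal.relNorm_algebraMap, map_mul, map_prod, Finset.prod_congr rfl fun g _ ↦
      Ideal.relNorm_smul A g I, Finset.prod_const, Finset.card_univ, ← Nat.card_eq_fintype_card,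
      ← IsGaloisGroup.card_eq_finrank' G A B] at this
  have hJnorm : Ideal.relNorm A J = 1 := (mul_right_eq_self₀.mp hmul.symm).resolve_right <|
    pow_ne_zero _ (Ideal.relNorm_eq_bot_iff.not.mpr hI)
  have hJ_top : J = ⊤ := by
    have := Ideal.relNorm_le_comap A J
    rwa [hJnorm, Ideal.one_eq_top, top_le_iff, Ideal.comap_eq_top_iff] at this
  rw [hJ, hJ_top, Ideal.mul_top]

theorem extendedHom_classGroupNorm [Finite G] (x : ClassGroup B) :
    ClassGroup.extendedHom A B (classGroupNorm A B x) = actionNorm G (ClassGroup B) x := by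
  have := Fintype.ofFinite G
  obtain ⟨I, rfl⟩ := ClassGroup.mk0_surjective x
  rw [classGroupNorm_mk0, ClassGroup.extendedHom_mk0, actionNorm_apply]
  simp_rw [smul_mk0]
  rw [← map_prod]
  refine congrArg _ (Subtype.ext ?_)
  rw [Submonoid.coe_finsetProd]
  exact map_relNorm_eq_prod_smul G A B (nonZeroDivisors.ne_zero I.2)

end GaloisNorm

section RelativeClassGroup

theorem eq_one_of_extendedHom_eq_one {R S : Type*} [CommRing R] [IsDedekindDomain R] [CommRing S]
    [IsDedekindDomain S] [Algebra R S] [Module.Finite R S] [Module.IsTorsionFree R S] {ℓ : ℕ}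
    (hℓ : (Module.finrank R S).Coprime ℓ) {x : ClassGroup R} (hx : x ∈ lTors (ClassGroup R) ℓ)
    (hxS : ClassGroup.extendedHom R S x = 1) : x = 1 :=
  eq_one_of_mem_lTors_of_pow_eq_one hℓ hx <| by
    rw [← classGroupNorm_extendedHom S, hxS, map_one]

variable (G : Type*) {A B : Type*} [Group G] [Finite G] [CommRing A] [IsDedekindDomain A]
  [CommRing B] [IsDedekindDomain B] [Algebra A B] [Module.Finite A B] [Module.IsTorsionFree A B]
  [MulSemiringAction G B] [IsGaloisGroup G A B] {ℓ : ℕ}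

theorem relativeClassGroup_inf_lTors (hℓ : (Nat.card G).Coprime ℓ) :
    relativeClassGroup A B ⊓ lTors (ClassGroup B) ℓ = normKerTorsion G (ClassGroup B) ℓ := by
  ext x
  refine and_congr_left fun hx ↦ ?_
  rw [IsGaloisGroup.card_eq_finrank' G A B] at hℓ
  change classGroupNorm A B x = 1 ↔ actionNorm G (ClassGroup B) x = 1
  rw [← extendedHom_classGroupNorm G A B]
  exact ⟨fun h ↦ by rw [h, map_one], eq_one_of_extendedHom_eq_one hℓ (map_mem_lTors _ hx)⟩

variable (A B) {C : Type*} [CommRing C] [IsDedekindDomain C] [Algebra A C] [Algebra C B]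
  [IsScalarTower A C B] [Module.Finite A C] [Module.Finite C B] [Module.IsTorsionFree A C]
  [Module.IsTorsionFree C B]

theorem extendedHom_mem_relativeClassGroup_iff (hℓ : (Module.finrank C B).Coprime ℓ)
    {x : ClassGroup C} (hx : x ∈ lTors (ClassGroup C) ℓ) :
    ClassGroup.extendedHom C B x ∈ relativeClassGroup A B ↔ x ∈ relativeClassGroup A C := by
  have hpow : classGroupNorm A B (ClassGroup.extendedHom C B x) =
      classGroupNorm A C x ^ Module.finrank C B := by
    rw [← classGroupNorm_classGroupNorm A B C, classGroupNorm_extendedHom, map_pow]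
  change classGroupNorm A B _ = 1 ↔ classGroupNorm A C x = 1
  rw [hpow]
  exact ⟨eq_one_of_mem_lTors_of_pow_eq_one hℓ (map_mem_lTors _ hx), fun h ↦ by rw [h, one_pow]⟩

variable (C) (H : Type*) [Group H] [Finite H] [MulSemiringAction H B] [IsGaloisGroup H C B]

theorem exists_extendedHom_eq_of_mem_fixedPoints (hℓ : (Nat.card H).Coprime ℓ)
    {y : ClassGroup B} (hy : y ∈ lTors (ClassGroup B) ℓ)
    (hfix : y ∈ FixedPoints.subgroup H (ClassGroup B)) :
    ∃ x ∈ lTors (ClassGroup C) ℓ, ClassGroup.extendedHom C B x = y := by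
  obtain ⟨m, hm⟩ := exists_pow_pow_eq_of_mem_lTors hℓ hy
  refine ⟨classGroupNorm C B y ^ m, pow_mem (map_mem_lTors _ hy) m, ?_⟩
  rw [map_pow, extendedHom_classGroupNorm H, actionNorm_of_mem_fixedPoints hfix, hm]

theorem map_extendedHom_relativeClassGroup_inf_lTors (hℓ : (Nat.card H).Coprime ℓ) :
    (relativeClassGroup A C ⊓ lTors (ClassGroup C) ℓ).map (ClassGroup.extendedHom C B) =
      relativeClassGroup A B ⊓ lTors (ClassGroup B) ℓ ⊓ FixedPoints.subgroup H (ClassGroup B) := by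
  have : SMulCommClass H C B := IsGaloisGroup.commutes
  have hrank := IsGaloisGroup.card_eq_finrank' H C B ▸ hℓ
  refine le_antisymm ?_ fun y hy ↦ ?_
  · rintro _ ⟨x, hx, rfl⟩
    exact ⟨⟨(extendedHom_mem_relativeClassGroup_iff A B hrank hx.2).mpr hx.1,
      map_mem_lTors _ hx.2⟩, fun h ↦ smul_extendedHom B h x⟩
  · obtain ⟨x, hx, rfl⟩ := exists_extendedHom_eq_of_mem_fixedPoints B C H hℓ hy.1.2 hy.2
    exact ⟨x, ⟨(extendedHom_mem_relativeClassGroup_iff A B hrank hx).mp hy.1.1, hx⟩, rfl⟩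

/-- Extension of ideals identifies the `ℓ`-torsion of the relative class group of an intermediate
ring `C` with the invariants of `H = Gal(B/C)` in the `ℓ`-torsion of the relative class group of
`B`. -/
noncomputable def relativeClassGroupTorsionEquiv (hℓ : (Nat.card H).Coprime ℓ) :
    ↥(relativeClassGroup A C ⊓ lTors (ClassGroup C) ℓ) ≃*
      ↥(relativeClassGroup A B ⊓ lTors (ClassGroup B) ℓ ⊓ FixedPoints.subgroup H (ClassGroup B)) :=
  (MulEquiv.ofBijective ((ClassGroup.extendedHom C B).subgroupMap _)
    ⟨(injective_iff_map_eq_one _).mpr fun x hx ↦ Subtype.ext <|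
      eq_one_of_extendedHom_eq_one (IsGaloisGroup.card_eq_finrank' H C B ▸ hℓ) x.2.2
        (congrArg Subtype.val hx), MonoidHom.subgroupMap_surjective _ _⟩).trans
    (MulEquiv.subgroupCongr (map_extendedHom_relativeClassGroup_inf_lTors A B C H hℓ))

end RelativeClassGroup

theorem relative_class_group_decomposition_general {p ℓ : ℕ} [Fact p.Prime] (hℓ : ℓ.Coprime p)
    {G V A B : Type*} [AddCommGroup V] [Module (ZMod p) V] [CommRing A] [IsDedekindDomain A]
    [CommRing B] [IsDedekindDomain B] [Algebra A B] [Module.Finite A B] [Module.IsTorsionFree A B]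
    [Group G] [Finite G] [MulSemiringAction G B] [IsGaloisGroup G A B] (e : G ≃* Multiplicative V)
    (C : {H : Subgroup G // H.index = p} → Type*) [∀ H, CommRing (C H)]
    [∀ H, IsDedekindDomain (C H)] [∀ H, Algebra A (C H)] [∀ H, Algebra (C H) B]
    [∀ H, IsScalarTower A (C H) B] [∀ H, Module.Finite A (C H)] [∀ H, Module.Finite (C H) B]
    [∀ H, Module.IsTorsionFree A (C H)] [∀ H, Module.IsTorsionFree (C H) B]
    [∀ H, IsGaloisGroup H.1 (C H) B] :
    Nonempty (↥(relativeClassGroup A B ⊓ lTors (ClassGroup B) ℓ) ≃*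
      ∀ H, ↥(relativeClassGroup A (C H) ⊓ lTors (ClassGroup (C H)) ℓ)) := by
  have hcard := coprime_card_of_mulEquiv_multiplicative e hℓ
  have hB : relativeClassGroup A B ⊓ lTors _ ℓ = normKerTorsion G (ClassGroup B) ℓ :=
    relativeClassGroup_inf_lTors G hcard
  have hC (H : {H : Subgroup G // H.index = p}) :
      ↥(relativeClassGroup A (C H) ⊓ lTors (ClassGroup (C H)) ℓ) ≃*
        ↥(normKerTorsion G (ClassGroup B) ℓ ⊓ FixedPoints.subgroup H.1 (ClassGroup B)) :=
    (relativeClassGroupTorsionEquiv A B (C H) H.1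
      (hcard.coprime_dvd_left H.1.card_subgroup_dvd_card)).trans
      (MulEquiv.subgroupCongr (congrArg (· ⊓ _) hB))
  exact ⟨((MulEquiv.subgroupCongr hB).trans
    (prodFixedPointsEquiv (ClassGroup B) e hℓ).symm).trans (MulEquiv.piCongrRight hC).symm⟩

section Galois

variable {k L : Type*} [Field k] [Field L] [Algebra k L] [FiniteDimensional k L] [IsGalois k L]

theorem finrank_fixedPoints_intermediateField (H : Subgroup Gal(L/k)) :
    Module.finrank k (FixedPoints.intermediateField H : IntermediateField k L) = H.index := by
  rw [IntermediateField.finrank_eq_fixingSubgroup_index]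
  exact congrArg Subgroup.index (IsGaloisGroup.fixingSubgroup_fixedPoints ..)

theorem bijective_fixedPoints_intermediateField :
    Function.Bijective fun H : Subgroup Gal(L/k) ↦
      (FixedPoints.intermediateField H : IntermediateField k L) :=
  Function.bijective_iff_has_inverse.mpr ⟨fun K ↦ fixingSubgroup Gal(L/k) (K : Set L),
    fun _ ↦ IsGaloisGroup.fixingSubgroup_fixedPoints .., fun _ ↦
    IsGaloisGroup.fixedPoints_fixingSubgroup ..⟩

theorem finprod_finrank_eq {M : Type*} [CommMonoid M] (n : ℕ) (f : IntermediateField k L → M) :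
    ∏ᶠ (K : IntermediateField k L) (_ : Module.finrank k K = n), f K =
      ∏ᶠ H : {H : Subgroup Gal(L/k) // H.index = n}, f (FixedPoints.intermediateField H.1) := by
  rw [← finprod_comp _ bijective_fixedPoints_intermediateField]
  simp_rw [finrank_fixedPoints_intermediateField]
  exact (finprod_subtype_eq_finprod_cond fun H : Subgroup Gal(L/k) ↦ H.index = n).symm

end Galois

/-- For `A = (ℤ/pℤ)^r` (`r ≥ 2`), `ℓ > 1` coprime to `p`, and an
`A`-extension `L/k` of number fields, the `ℓ`-torsion of the relative class
group (the kernel of the ideal-norm map `Nm` on class groups) satisfies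
`|Cl_{L/k}[ℓ]| = Π_i |Cl_{K_i/k}[ℓ]|`, the product over all degree-`p`
subfields `K_i` of `L/k`. -/
theorem relative_class_group_decomposition (p r ℓ : ℕ) (hp : p.Prime)
    (hr : 2 ≤ r) (hℓ : 1 < ℓ) (hcop : ℓ.Coprime p)
    (k L : Type) [Field k] [Field L] [NumberField k] [NumberField L]
    [Algebra k L] [IsGalois k L]
    (e : (L ≃ₐ[k] L) ≃* Multiplicative (Fin r → ZMod p))
    (NmL : ClassGroup (𝓞 L) →* ClassGroup (𝓞 k))
    (hNmL : ∀ (I : Ideal (𝓞 L)) (hI : I ∈ nonZeroDivisors (Ideal (𝓞 L)))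
      (hJ : Ideal.spanNorm (𝓞 k) I ∈ nonZeroDivisors (Ideal (𝓞 k))),
      NmL (ClassGroup.mk0 ⟨I, hI⟩) = ClassGroup.mk0 ⟨Ideal.spanNorm (𝓞 k) I, hJ⟩)
    (Nm : ∀ K : IntermediateField k L, ClassGroup (𝓞 K) →* ClassGroup (𝓞 k))
    (hNm : ∀ (K : IntermediateField k L) (I : Ideal (𝓞 K))
      (hI : I ∈ nonZeroDivisors (Ideal (𝓞 K)))
      (hJ : Ideal.spanNorm (𝓞 k) I ∈ nonZeroDivisors (Ideal (𝓞 k))),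
      Nm K (ClassGroup.mk0 ⟨I, hI⟩) =
        ClassGroup.mk0 ⟨Ideal.spanNorm (𝓞 k) I, hJ⟩) :
    Nat.card ↥(NmL.ker ⊓ lTors (ClassGroup (𝓞 L)) ℓ) =
      ∏ᶠ (K : IntermediateField k L) (_ : Module.finrank k K = p),
        Nat.card ↥((Nm K).ker ⊓ lTors (ClassGroup (𝓞 K)) ℓ) := by
  have : Fact p.Prime := ⟨hp⟩
  have hL : NmL = classGroupNorm (𝓞 k) (𝓞 L) := eq_classGroupNorm hNmL
  have hK (K : IntermediateField k L) : Nm K = classGroupNorm (𝓞 k) (𝓞 K) :=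
    eq_classGroupNorm (hNm K)
  have (H : {H : Subgroup Gal(L/k) // H.index = p}) :
      IsGaloisGroup H.1 (𝓞 (FixedPoints.intermediateField H.1 : IntermediateField k L)) (𝓞 L) :=
    .of_isFractionRing _ _ _ (FixedPoints.intermediateField H.1 : IntermediateField k L) L
  obtain ⟨decomposition⟩ := relative_class_group_decomposition_general hcop (A := 𝓞 k) (B := 𝓞 L) e
    fun H ↦ 𝓞 (FixedPoints.intermediateField H.1 : IntermediateField k L)
  have := Fintype.ofFinite {H : Subgroup Gal(L/k) // H.index = p}
  simp_rw [hL, hK]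
  rw [finprod_finrank_eq, finprod_eq_prod_of_fintype, ← Nat.card_pi]
  exact Nat.card_congr decomposition.toEquiv
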